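/- arXiv:1807.05801 — 4 statements merged into one kernel-verified Lean document; each statement's English description precedes it below -/
import Mathlib

section
/- Let (X_t)_{t∈ℝ} be a strictly stationary ℝ^n-valued process on a probability space with E[‖X_0‖^p]^{1/p} ≤ C for some constant C > 0 and some p > 1. Let h : ℝ^n → ℝ^m satisfy the growth–Lipschitz condition with constants c > 0 and a, where 1 ≤ a < p, and define Y_t = h(X_t). If (X_t)_{t∈ℝ} is η-weakly dependent with coefficients (η_X(r))_{r≥0}, then (Y_t)_{t∈ℝ} is η-weakly dependent with coefficients η_Y(r) = 𝒞 · η_X(r)^{(p−a)/(p−1)} for some constant 𝒞 ≥ 0 independent of r. -/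
open MeasureTheory ProbabilityTheory Filter

noncomputable section

/-- Covariance of two real-valued random variables. -/
def cov {Ω : Type*} [MeasurableSpace Ω] (μ : Measure Ω) (U V : Ω → ℝ) : ℝ :=
  (∫ ω, U ω * V ω ∂μ) - (∫ ω, U ω ∂μ) * (∫ ω, V ω ∂μ)

/-- `L` is a (nonnegative) Lipschitz bound for `F` with respect to the distance
`δ₁(x,y) = ∑ i ‖x i - y i‖` on `Eᵘ`. -/
def Delta1Lip {E : Type*} [NormedAddCommGroup E] {u : ℕ} (F : (Fin u → E) → ℝ) (L : ℝ) : Prop :=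
  0 ≤ L ∧ ∀ x y : Fin u → E, |F x - F y| ≤ L * ∑ i, ‖x i - y i‖

/-- η-weak dependence of a process with coefficients `η` and constant `c₀`: `η r → 0` and the
covariance of Lipschitz functionals of the past and the future, separated by a time gap `r`,
is controlled by `c₀ (u Lip(F) + v Lip(G)) η(r)`. -/
def EtaWeaklyDependent {Ω : Type*} [MeasurableSpace Ω] (μ : Measure Ω)
    {E : Type*} [NormedAddCommGroup E] [MeasurableSpace E]
    (X : ℝ → Ω → E) (η : ℝ → ℝ) (c₀ : ℝ) : Prop :=
  0 ≤ c₀ ∧ (∀ r, 0 ≤ η r) ∧ Tendsto η atTop (nhds 0) ∧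
    ∀ (u v : ℕ), 0 < u → 0 < v → ∀ r : ℝ, 0 ≤ r →
      ∀ (i : Fin u → ℝ) (j : Fin v → ℝ), Monotone i → Monotone j →
        (∀ a b, i a + r ≤ j b) →
        ∀ (F : (Fin u → E) → ℝ) (G : (Fin v → E) → ℝ) (LF LG : ℝ),
          Measurable F → Measurable G →
          (∀ x, |F x| ≤ 1) → (∀ x, |G x| ≤ 1) →
          Delta1Lip F LF → Delta1Lip G LG →
          |cov μ (fun ω => F fun a => X (i a) ω) (fun ω => G fun b => X (j b) ω)| ≤
            c₀ * ((u : ℝ) * LF + (v : ℝ) * LG) * η r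

/-- Strict stationarity of an `ℝ`-indexed process: shifted finite-dimensional marginals have
the same distribution. -/
def StrictlyStationary {Ω : Type*} [MeasurableSpace Ω] (μ : Measure Ω)
    {E : Type*} [MeasurableSpace E] (X : ℝ → Ω → E) : Prop :=
  ∀ (s : ℝ) (u : ℕ) (t : Fin u → ℝ),
    IdentDistrib (fun ω (a : Fin u) => X (t a + s) ω) (fun ω (a : Fin u) => X (t a) ω) μ μ

/-- The growth–Lipschitz condition with constants `c` and `a`:
`h 0 = 0` and `‖h x - h y‖ ≤ c ‖x - y‖ (1 + ‖x‖^(a-1) + ‖y‖^(a-1))`. -/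
def GrowthLip {n m : ℕ} (h : EuclideanSpace ℝ (Fin n) → EuclideanSpace ℝ (Fin m))
    (c a : ℝ) : Prop :=
  h 0 = 0 ∧ ∀ x y, ‖h x - h y‖ ≤ c * ‖x - y‖ * (1 + ‖x‖ ^ (a - 1) + ‖y‖ ^ (a - 1))

/-!
Truncate `X` radially at level `M ≥ 1`. On the ball of radius `M` the map `h` is Lipschitz with
constant of order `M ^ (a - 1)`, so the truncated process `h (T_M X)` is η-weakly dependent with
the same coefficients as `X` and a constant of order `M ^ (a - 1)`. The error `h X - h (T_M X)`
vanishes unless `‖X‖ > M`, and there it is at most of order `‖X‖ ^ a ≤ M ^ (a - p) * ‖X‖ ^ p`, so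
it costs `O(M ^ (a - p))` in `L¹`. Hence the covariances of functionals `F`, `G` of `h X` are
`O(M ^ (a - p) + M ^ (a - 1) * η r)` times `u Lip(F) + v Lip(G)`, and `M = η r ^ (-1 / (p - 1))`
balances the two terms. When `η r > 1` this `M` is less than `1`; then comparing `h X` with the
constant `h 0` suffices.
-/

section Cov

variable {Ω : Type*} [MeasurableSpace Ω] {μ : Measure Ω} {U U' V V' : Ω → ℝ}

lemma cov_comm : cov μ U V = cov μ V U := by
  simp only [cov, mul_comm]

variable [IsProbabilityMeasure μ]

lemma cov_const_left (k : ℝ) : cov μ (fun _ => k) V = 0 := by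
  simp [cov, integral_const_mul]

lemma cov_eq_covariance (hU : MemLp U 2 μ) (hV : MemLp V 2 μ) : cov μ U V = cov[U, V; μ] :=
  (covariance_eq_sub hU hV).symm

lemma cov_sub_left (hU : MemLp U 2 μ) (hU' : MemLp U' 2 μ) (hV : MemLp V 2 μ) :
    cov μ (U - U') V = cov μ U V - cov μ U' V := by
  rw [cov_eq_covariance (hU.sub hU') hV, cov_eq_covariance hU hV, cov_eq_covariance hU' hV,
    covariance_sub_left hU hU' hV]

lemma abs_cov_le_two_mul_integral_abs (hU : Integrable U μ) (hV : ∀ ω, |V ω| ≤ 1) :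
    |cov μ U V| ≤ 2 * ∫ ω, |U ω| ∂μ := by
  have hmul : |∫ ω, U ω * V ω ∂μ| ≤ ∫ ω, |U ω| ∂μ :=
    norm_integral_le_of_norm_le (f := fun ω => U ω * V ω) hU.abs <| .of_forall fun ω => by
      rw [Real.norm_eq_abs, abs_mul]
      exact mul_le_of_le_one_right (abs_nonneg _) (hV ω)
  have hV' : |∫ ω, V ω ∂μ| ≤ 1 := by
    simpa using norm_integral_le_of_norm_le_const (μ := μ) (f := V) (C := 1) (.of_forall hV)
  have hprod : |(∫ ω, U ω ∂μ) * ∫ ω, V ω ∂μ| ≤ ∫ ω, |U ω| ∂μ := by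
    rw [abs_mul]
    exact (mul_le_of_le_one_right (abs_nonneg _) hV').trans abs_integral_le_integral_abs
  calc |cov μ U V| ≤ |∫ ω, U ω * V ω ∂μ| + |(∫ ω, U ω ∂μ) * ∫ ω, V ω ∂μ| := abs_sub _ _
    _ ≤ 2 * ∫ ω, |U ω| ∂μ := by linarith

lemma abs_cov_le_abs_cov_add (mU : Measurable U) (mU' : Measurable U') (mV : Measurable V)
    (mV' : Measurable V') (hU : ∀ ω, |U ω| ≤ 1) (hU' : ∀ ω, |U' ω| ≤ 1) (hV : ∀ ω, |V ω| ≤ 1)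
    (hV' : ∀ ω, |V' ω| ≤ 1) :
    |cov μ U V| ≤ |cov μ U' V'| + 2 * (∫ ω, |U ω - U' ω| ∂μ + ∫ ω, |V ω - V' ω| ∂μ) := by
  have memLp {W : Ω → ℝ} (mW : Measurable W) (hW : ∀ ω, |W ω| ≤ 1) : MemLp W 2 μ :=
    .of_bound mW.aestronglyMeasurable 1 (.of_forall hW)
  have iU := ((memLp mU hU).sub (memLp mU' hU')).integrable one_le_two
  have iV := ((memLp mV hV).sub (memLp mV' hV')).integrable one_le_two
  have hdecomp : cov μ U V = cov μ U' V' + (cov μ (U - U') V + cov μ (V - V') U') := by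
    rw [cov_sub_left (memLp mU hU) (memLp mU' hU') (memLp mV hV),
      cov_sub_left (memLp mV hV) (memLp mV' hV') (memLp mU' hU'), cov_comm (U := V) (V := U'),
      cov_comm (U := V') (V := U')]
    ring
  calc |cov μ U V| ≤ |cov μ U' V'| + (|cov μ (U - U') V| + |cov μ (V - V') U'|) := by
        rw [hdecomp]
        exact (abs_add_le _ _).trans (add_le_add_right (abs_add_le _ _) _)
    _ ≤ |cov μ U' V'| + (2 * ∫ ω, |U ω - U' ω| ∂μ + 2 * ∫ ω, |V ω - V' ω| ∂μ) := by
        gcongr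
        · exact abs_cov_le_two_mul_integral_abs iU hV
        · exact abs_cov_le_two_mul_integral_abs iV hU'
    _ = _ := by ring

end Cov

section L1Close

variable {Ω E : Type*} [MeasurableSpace Ω] {μ : Measure Ω} [NormedAddCommGroup E]
  {U V : Ω → E} {ε : ℝ}

/-- `U` and `V` are at `L¹(μ)`-distance at most `ε`, the sense in which processes are approximated
below. Integrability is part of the definition since the Bochner integral of a non-integrable
function is `0`; it is required of `‖U - V‖` only, which makes sense without strong measurability
of `U - V`. -/
def L1Close (μ : Measure Ω) (U V : Ω → E) (ε : ℝ) : Prop :=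
  Integrable (fun ω => ‖U ω - V ω‖) μ ∧ ∫ ω, ‖U ω - V ω‖ ∂μ ≤ ε

lemma L1Close.nonneg (hUV : L1Close μ U V ε) : 0 ≤ ε :=
  (integral_nonneg fun _ => norm_nonneg _).trans hUV.2

lemma L1Close.mono {δ : ℝ} (hUV : L1Close μ U V ε) (hεδ : ε ≤ δ) : L1Close μ U V δ :=
  ⟨hUV.1, hUV.2.trans hεδ⟩

lemma L1Close.of_norm_sub_le {w : Ω → ℝ} (hm : AEStronglyMeasurable (fun ω => ‖U ω - V ω‖) μ)
    (hw : Integrable w μ) (hle : ∀ ω, ‖U ω - V ω‖ ≤ w ω) (hε : ∫ ω, w ω ∂μ ≤ ε) :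
    L1Close μ U V ε := by
  have hint : Integrable (fun ω => ‖U ω - V ω‖) μ :=
    hw.mono' hm (.of_forall fun ω => by simpa only [norm_norm] using hle ω)
  exact ⟨hint, (integral_mono hint hw hle).trans hε⟩

end L1Close

section IsTestFunction

variable {Ω E E' : Type*} [MeasurableSpace Ω] {μ : Measure Ω} [NormedAddCommGroup E]
  [NormedAddCommGroup E'] {u v : ℕ} {F : (Fin u → E) → ℝ} {G : (Fin v → E) → ℝ} {L LF LG ε : ℝ}

lemma Delta1Lip.integral_abs_sub_le {Y Z : Fin u → Ω → E} (hF : Delta1Lip F L)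
    (hYZ : ∀ k, L1Close μ (Y k) (Z k) ε) :
    ∫ ω, |F (fun k => Y k ω) - F (fun k => Z k ω)| ∂μ ≤ u * L * ε := by
  have hL := hF.1
  calc ∫ ω, |F (fun k => Y k ω) - F (fun k => Z k ω)| ∂μ
      ≤ ∫ ω, L * ∑ k, ‖Y k ω - Z k ω‖ ∂μ :=
        integral_mono_of_nonneg (.of_forall fun _ => abs_nonneg _)
          ((integrable_finsetSum _ fun k _ => (hYZ k).1).const_mul L) (.of_forall fun _ => hF.2 _ _)
    _ = L * ∑ k, ∫ ω, ‖Y k ω - Z k ω‖ ∂μ := by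
        rw [integral_const_mul, integral_finsetSum _ fun k _ => (hYZ k).1]
    _ ≤ L * ∑ _k : Fin u, ε := by gcongr with k; exact (hYZ k).2
    _ = u * L * ε := by
        rw [Finset.sum_const, Finset.card_univ, Fintype.card_fin, nsmul_eq_mul]
        ring

variable [MeasurableSpace E] [MeasurableSpace E']

/-- The functionals tested in the definition of η-weak dependence: measurable, bounded by `1`, and
Lipschitz with constant `L` for the distance `δ₁`. -/
structure IsTestFunction (F : (Fin u → E) → ℝ) (L : ℝ) : Prop where
  measurable : Measurable F
  abs_le_one : ∀ x, |F x| ≤ 1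
  delta1Lip : Delta1Lip F L

lemma IsTestFunction.comp_lipschitzWith {F : (Fin u → E') → ℝ} (hF : IsTestFunction F L)
    {g : E → E'} (mg : Measurable g) {K : NNReal} (hg : LipschitzWith K g) :
    IsTestFunction (fun x => F fun k => g (x k)) (L * K) where
  measurable := hF.measurable.comp (by fun_prop)
  abs_le_one _ := hF.abs_le_one _
  delta1Lip := by
    have hL := hF.delta1Lip.1
    refine ⟨by positivity, fun x y => ?_⟩
    calc |F (fun k => g (x k)) - F (fun k => g (y k))|
        ≤ L * ∑ k, ‖g (x k) - g (y k)‖ := hF.delta1Lip.2 _ _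
      _ ≤ L * ∑ k, K * ‖x k - y k‖ := by gcongr; exact hg.norm_sub_le _ _
      _ = L * K * ∑ k, ‖x k - y k‖ := by rw [← Finset.mul_sum, mul_assoc]

lemma IsTestFunction.abs_cov_le_of_l1Close [IsProbabilityMeasure μ] (hF : IsTestFunction F LF)
    (hG : IsTestFunction G LG) {Y Z : Fin u → Ω → E} {Y' Z' : Fin v → Ω → E}
    (mY : ∀ k, Measurable (Y k)) (mZ : ∀ k, Measurable (Z k))
    (mY' : ∀ k, Measurable (Y' k)) (mZ' : ∀ k, Measurable (Z' k))
    (hYZ : ∀ k, L1Close μ (Y k) (Z k) ε) (hYZ' : ∀ k, L1Close μ (Y' k) (Z' k) ε) :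
    |cov μ (fun ω => F fun k => Y k ω) (fun ω => G fun k => Y' k ω)| ≤
      |cov μ (fun ω => F fun k => Z k ω) (fun ω => G fun k => Z' k ω)| +
        2 * (u * LF + v * LG) * ε := by
  calc |cov μ (fun ω => F fun k => Y k ω) (fun ω => G fun k => Y' k ω)|
      ≤ |cov μ (fun ω => F fun k => Z k ω) (fun ω => G fun k => Z' k ω)| +
          2 * (∫ ω, |F (fun k => Y k ω) - F (fun k => Z k ω)| ∂μ +
            ∫ ω, |G (fun k => Y' k ω) - G (fun k => Z' k ω)| ∂μ) :=
        abs_cov_le_abs_cov_add (hF.measurable.comp (measurable_pi_lambda _ mY))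
          (hF.measurable.comp (measurable_pi_lambda _ mZ))
          (hG.measurable.comp (measurable_pi_lambda _ mY'))
          (hG.measurable.comp (measurable_pi_lambda _ mZ')) (fun _ => hF.abs_le_one _)
          (fun _ => hF.abs_le_one _) (fun _ => hG.abs_le_one _) (fun _ => hG.abs_le_one _)
    _ ≤ |cov μ (fun ω => F fun k => Z k ω) (fun ω => G fun k => Z' k ω)| +
          2 * (u * LF * ε + v * LG * ε) := by
        gcongr
        · exact hF.delta1Lip.integral_abs_sub_le hYZ
        · exact hG.delta1Lip.integral_abs_sub_le hYZ'
    _ = _ := by ring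

end IsTestFunction

section Interpolation

open Real

variable {A B K x α β : ℝ}

lemma le_mul_rpow_of_forall_one_le (hα : 0 ≤ α) (hβ : 0 < β) (hA : 0 ≤ A) (hB : 0 ≤ B) (hx : 0 ≤ x)
    (hKA : K ≤ A) (hK : ∀ M, 1 ≤ M → K ≤ A * M ^ (-β) + B * M ^ α * x) :
    K ≤ (A + B) * x ^ (β / (α + β)) := by
  have hαβ : 0 < α + β := by positivity
  have hθ : 0 < β / (α + β) := by positivity
  rcases hx.eq_or_lt with rfl | hx
  · have hlim : Tendsto (fun M : ℝ => A * M ^ (-β)) atTop (nhds 0) := by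
      simpa only [mul_zero] using (tendsto_rpow_neg_atTop hβ).const_mul A
    rw [zero_rpow hθ.ne', mul_zero]
    refine ge_of_tendsto hlim ?_
    filter_upwards [eventually_ge_atTop 1] with M hM
    simpa only [mul_zero, add_zero] using hK M hM
  rcases le_or_gt x 1 with hx1 | hx1
  · -- `M = x ^ (-1 / (α + β))` solves `M ^ (-β) = M ^ α * x`.
    have hM : 1 ≤ x ^ (-1 / (α + β)) := one_le_rpow_of_pos_of_le_one_of_nonpos hx hx1
      (div_nonpos_of_nonpos_of_nonneg (by norm_num) hαβ.le)
    have hMβ : (x ^ (-1 / (α + β))) ^ (-β) = x ^ (β / (α + β)) := by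
      rw [← rpow_mul hx.le]
      ring_nf
    have hMα : (x ^ (-1 / (α + β))) ^ α * x = x ^ (β / (α + β)) := by
      rw [← rpow_mul hx.le, ← rpow_add_one hx.ne']
      congr 1
      field_simp
      ring
    refine (hK _ hM).trans_eq ?_
    rw [mul_assoc, hMβ, hMα, add_mul]
  · calc K ≤ (A + B) * 1 := by linarith
      _ ≤ (A + B) * x ^ (β / (α + β)) := by gcongr; exact one_le_rpow hx1.le hθ.le

end Interpolation

section EtaWeaklyDependent

variable {Ω E E' : Type*} [MeasurableSpace Ω] {μ : Measure Ω}
  [NormedAddCommGroup E] [MeasurableSpace E] [NormedAddCommGroup E'] [MeasurableSpace E']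
  {η : ℝ → ℝ} {c₀ : ℝ}

lemma EtaWeaklyDependent.comp_lipschitzWith {X : ℝ → Ω → E} (hX : EtaWeaklyDependent μ X η c₀)
    {g : E → E'} (mg : Measurable g) {K : NNReal} (hg : LipschitzWith K g) :
    EtaWeaklyDependent μ (fun t ω => g (X t ω)) η (c₀ * K) := by
  obtain ⟨hc₀, hη, hη_lim, hcov⟩ := hX
  refine ⟨by positivity, hη, hη_lim, ?_⟩
  intro u v hu hv r hr i j hi hj hij F G LF LG mF mG bF bG lF lG
  have hFg := IsTestFunction.comp_lipschitzWith ⟨mF, bF, lF⟩ mg hg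
  have hGg := IsTestFunction.comp_lipschitzWith ⟨mG, bG, lG⟩ mg hg
  refine (hcov u v hu hv r hr i j hi hj hij _ _ _ _ hFg.measurable hGg.measurable hFg.abs_le_one
    hGg.abs_le_one hFg.delta1Lip hGg.delta1Lip).trans_eq ?_
  ring

theorem EtaWeaklyDependent.of_l1Close [IsProbabilityMeasure μ] {Y : ℝ → Ω → E}
    {Z : ℝ → ℝ → Ω → E} {y₀ : E} {A B α β : ℝ} (hα : 0 ≤ α) (hβ : 0 < β)
    (mY : ∀ t, Measurable (Y t)) (mZ : ∀ M, 1 ≤ M → ∀ t, Measurable (Z M t))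
    (hZ : ∀ M, 1 ≤ M → EtaWeaklyDependent μ (Z M) η (B * M ^ α))
    (hYZ : ∀ M, 1 ≤ M → ∀ t, L1Close μ (Y t) (Z M t) (A * M ^ (-β)))
    (hY : ∀ t, L1Close μ (Y t) (fun _ => y₀) A) :
    EtaWeaklyDependent μ Y (fun r => (2 * A + B) * η r ^ (β / (α + β))) 1 := by
  obtain ⟨hB, hη, hη_lim, -⟩ := hZ 1 le_rfl
  rw [Real.one_rpow, mul_one] at hB
  have hA : 0 ≤ A := (hY 0).nonneg
  have hθ : 0 < β / (α + β) := by positivity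
  refine ⟨zero_le_one, fun r => mul_nonneg (by positivity) (Real.rpow_nonneg (hη r) _), ?_, ?_⟩
  · simpa only [Real.zero_rpow hθ.ne', mul_zero] using
      (hη_lim.rpow_const (.inr hθ.le)).const_mul (2 * A + B)
  intro u v hu hv r hr i j hi hj hij F G LF LG mF mG bF bG lF lG
  have hF : IsTestFunction F LF := ⟨mF, bF, lF⟩
  have hG : IsTestFunction G LG := ⟨mG, bG, lG⟩
  have hLF := lF.1
  have hLG := lG.1
  set S : ℝ := u * LF + v * LG
  have : 0 ≤ S := by positivity
  have hconst : |cov μ (fun ω => F fun k => Y (i k) ω) (fun ω => G fun k => Y (j k) ω)| ≤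
      2 * S * A := by
    simpa only [cov_const_left, abs_zero, zero_add] using
      hF.abs_cov_le_of_l1Close hG (fun k => mY (i k)) (fun _ => measurable_const)
        (fun k => mY (j k)) (fun _ => measurable_const) (fun k => hY (i k)) (fun k => hY (j k))
  have happrox (M : ℝ) (hM : 1 ≤ M) :
      |cov μ (fun ω => F fun k => Y (i k) ω) (fun ω => G fun k => Y (j k) ω)| ≤
        2 * S * A * M ^ (-β) + S * B * M ^ α * η r := by
    have hcovZ := (hZ M hM).2.2.2 u v hu hv r hr i j hi hj hij F G LF LG mF mG bF bG lF lG
    have hcovY := hF.abs_cov_le_of_l1Close hG (fun k => mY (i k)) (fun k => mZ M hM (i k))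
      (fun k => mY (j k)) (fun k => mZ M hM (j k)) (fun k => hYZ M hM (i k))
      (fun k => hYZ M hM (j k))
    linarith
  refine (le_mul_rpow_of_forall_one_le hα hβ (by positivity) (by positivity) (hη r) hconst
    happrox).trans_eq ?_
  ring

end EtaWeaklyDependent

section RadialTrunc

variable {E : Type*} [SeminormedAddCommGroup E] [NormedSpace ℝ E] {M : ℝ}

/-- The radial retraction of `E` onto the closed ball of radius `M > 0` around the origin.
Precomposing with it makes a growth–Lipschitz map globally Lipschitz. -/
def radialTrunc (M : ℝ) (x : E) : E :=
  (M / max M ‖x‖) • x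

lemma radialTrunc_of_norm_le (hM : 0 < M) {x : E} (hx : ‖x‖ ≤ M) : radialTrunc M x = x := by
  rw [radialTrunc, max_eq_left hx, div_self hM.ne', one_smul]

lemma norm_radialTrunc_le (hM : 0 < M) (x : E) : ‖radialTrunc M x‖ ≤ M := by
  have hmax : 0 < max M ‖x‖ := lt_max_of_lt_left hM
  rw [radialTrunc, norm_smul, Real.norm_of_nonneg (by positivity), div_mul_eq_mul_div,
    div_le_iff₀ hmax]
  gcongr
  exact le_max_right _ _

lemma norm_sub_radialTrunc_le (hM : 0 < M) (x : E) : ‖x - radialTrunc M x‖ ≤ ‖x‖ := by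
  have hmax : 0 < max M ‖x‖ := lt_max_of_lt_left hM
  have hle : M / max M ‖x‖ ≤ 1 := (div_le_one hmax).2 (le_max_left _ _)
  have hnonneg : 0 ≤ M / max M ‖x‖ := by positivity
  have hsub : x - radialTrunc M x = (1 - M / max M ‖x‖) • x := by
    rw [radialTrunc, sub_smul, one_smul]
  rw [hsub, norm_smul, Real.norm_of_nonneg (sub_nonneg.2 hle)]
  exact mul_le_of_le_one_left (norm_nonneg _) (sub_le_self _ hnonneg)

lemma lipschitzWith_radialTrunc (hM : 0 < M) : LipschitzWith 2 (radialTrunc M : E → E) := by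
  refine LipschitzWith.of_dist_le_mul fun x y => ?_
  rw [dist_eq_norm, dist_eq_norm, NNReal.coe_ofNat]
  set s := max M ‖x‖
  set t := max M ‖y‖
  have hs : 0 < s := lt_max_of_lt_left hM
  have ht : 0 < t := lt_max_of_lt_left hM
  have hMs : M / s ≤ 1 := (div_le_one hs).2 (le_max_left _ _)
  have hyt : ‖y‖ / t ≤ 1 := (div_le_one ht).2 (le_max_right _ _)
  have hts : |t - s| ≤ ‖x - y‖ := by
    rw [norm_sub_rev]
    simpa only [s, t, max_comm M] using
      (abs_max_sub_max_le_abs ‖y‖ ‖x‖ M).trans (abs_norm_sub_norm_le y x)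
  have hscale : ‖(M / s - M / t) • y‖ = M / s * (‖y‖ / t) * |t - s| := by
    have hdiff : M / s - M / t = M / s / t * (t - s) := by field_simp
    rw [hdiff, norm_smul, norm_mul, Real.norm_of_nonneg (by positivity), Real.norm_eq_abs]
    ring
  calc ‖radialTrunc M x - radialTrunc M y‖ = ‖(M / s) • (x - y) + (M / s - M / t) • y‖ := by
        change ‖(M / s) • x - (M / t) • y‖ = _
        congr 1
        module
    _ ≤ ‖(M / s) • (x - y)‖ + ‖(M / s - M / t) • y‖ := norm_add_le _ _
    _ = M / s * ‖x - y‖ + M / s * (‖y‖ / t) * |t - s| := by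
        rw [hscale, norm_smul, Real.norm_of_nonneg (by positivity)]
    _ ≤ 1 * ‖x - y‖ + 1 * 1 * ‖x - y‖ := by gcongr
    _ = 2 * ‖x - y‖ := by ring

end RadialTrunc

section GrowthLipschitz

variable {E E' : Type*} [SeminormedAddCommGroup E] [SeminormedAddCommGroup E'] {h : E → E'}
  {c a p M : ℝ}

/-- The inequality of the growth–Lipschitz condition, for maps between arbitrary seminormed groups
and without the normalization `h 0 = 0`. -/
def GrowthLipschitz (h : E → E') (c a : ℝ) : Prop :=
  ∀ x y, ‖h x - h y‖ ≤ c * ‖x - y‖ * (1 + ‖x‖ ^ (a - 1) + ‖y‖ ^ (a - 1))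

namespace GrowthLipschitz

lemma norm_sub_le_of_norm_le (hh : GrowthLipschitz h c a) (hc : 0 ≤ c) (ha : 1 ≤ a) (hM : 1 ≤ M)
    {x y : E} (hx : ‖x‖ ≤ M) (hy : ‖y‖ ≤ M) : ‖h x - h y‖ ≤ 3 * c * M ^ (a - 1) * ‖x - y‖ := by
  have ha' : 0 ≤ a - 1 := sub_nonneg.2 ha
  calc ‖h x - h y‖ ≤ c * ‖x - y‖ * (1 + ‖x‖ ^ (a - 1) + ‖y‖ ^ (a - 1)) := hh x y
    _ ≤ c * ‖x - y‖ * (M ^ (a - 1) + M ^ (a - 1) + M ^ (a - 1)) := by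
        gcongr
        exact Real.one_le_rpow hM ha'
    _ = 3 * c * M ^ (a - 1) * ‖x - y‖ := by ring

lemma continuous (hh : GrowthLipschitz h c a) (hc : 0 ≤ c) (ha : 1 ≤ a) : Continuous h := by
  refine LocallyLipschitz.continuous fun x => ?_
  have hball : Metric.closedBall (0 : E) (‖x‖ + 1) ∈ nhds x :=
    Metric.closedBall_mem_nhds_of_mem (by simp)
  refine ⟨_, _, hball, LipschitzOnWith.of_dist_le' (K := 3 * c * (‖x‖ + 1) ^ (a - 1)) ?_⟩
  intro y hy z hz
  rw [mem_closedBall_zero_iff] at hy hz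
  simpa only [dist_eq_norm] using
    hh.norm_sub_le_of_norm_le hc ha (le_add_of_nonneg_left (norm_nonneg x)) hy hz

variable [NormedSpace ℝ E]

lemma lipschitzWith_comp_radialTrunc (hh : GrowthLipschitz h c a) (hc : 0 ≤ c) (ha : 1 ≤ a)
    (hM : 1 ≤ M) :
    LipschitzWith (6 * c * M ^ (a - 1)).toNNReal (fun x => h (radialTrunc M x)) := by
  have hM0 : 0 < M := one_pos.trans_le hM
  refine LipschitzWith.of_dist_le' fun x y => ?_
  calc dist (h (radialTrunc M x)) (h (radialTrunc M y))
      ≤ 3 * c * M ^ (a - 1) * dist (radialTrunc M x) (radialTrunc M y) := by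
        simpa only [dist_eq_norm] using hh.norm_sub_le_of_norm_le hc ha hM
          (norm_radialTrunc_le hM0 x) (norm_radialTrunc_le hM0 y)
    _ ≤ 3 * c * M ^ (a - 1) * (2 * dist x y) := by
        gcongr
        exact (lipschitzWith_radialTrunc hM0).dist_le_mul x y
    _ = 6 * c * M ^ (a - 1) * dist x y := by ring

lemma norm_sub_comp_radialTrunc_le (hh : GrowthLipschitz h c a) (hc : 0 ≤ c) (ha : 1 ≤ a)
    (hap : a ≤ p) (hM : 1 ≤ M) (x : E) :
    ‖h x - h (radialTrunc M x)‖ ≤ 3 * c * M ^ (a - p) * ‖x‖ ^ p := by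
  have hM0 : 0 < M := one_pos.trans_le hM
  rcases le_or_gt ‖x‖ M with hx | hx
  · rw [radialTrunc_of_norm_le hM0 hx, sub_self, norm_zero]
    positivity
  have hx0 : 0 < ‖x‖ := hM0.trans hx
  calc ‖h x - h (radialTrunc M x)‖ ≤ 3 * c * ‖x‖ ^ (a - 1) * ‖x - radialTrunc M x‖ :=
        hh.norm_sub_le_of_norm_le hc ha (hM.trans hx.le) le_rfl
          ((norm_radialTrunc_le hM0 x).trans hx.le)
    _ ≤ 3 * c * ‖x‖ ^ (a - 1) * ‖x‖ := by gcongr; exact norm_sub_radialTrunc_le hM0 x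
    _ = 3 * c * (‖x‖ ^ (a - p) * ‖x‖ ^ p) := by
        rw [mul_assoc, ← Real.rpow_add_one hx0.ne', ← Real.rpow_add hx0]
        ring_nf
    _ ≤ 3 * c * (M ^ (a - p) * ‖x‖ ^ p) := by
        have := Real.rpow_le_rpow_of_nonpos hM0 hx.le (sub_nonpos.2 hap)
        gcongr
    _ = 3 * c * M ^ (a - p) * ‖x‖ ^ p := by ring

lemma norm_sub_apply_zero_le (hh : GrowthLipschitz h c a) (hc : 0 ≤ c) (ha : 1 ≤ a) (hap : a ≤ p)
    (x : E) : ‖h x - h 0‖ ≤ 3 * c * (1 + ‖x‖ ^ p) := by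
  have htail : ‖h x - h (radialTrunc 1 x)‖ ≤ 3 * c * ‖x‖ ^ p := by
    simpa only [Real.one_rpow, mul_one] using
      hh.norm_sub_comp_radialTrunc_le hc ha hap le_rfl x
  have hnorm : ‖radialTrunc 1 x‖ ≤ 1 := norm_radialTrunc_le one_pos x
  have hball : ‖h (radialTrunc 1 x) - h 0‖ ≤ 3 * c := by
    refine (hh.norm_sub_le_of_norm_le hc ha le_rfl hnorm (by simp)).trans ?_
    rw [sub_zero, Real.one_rpow, mul_one]
    exact mul_le_of_le_one_right (by positivity) hnorm
  linarith [norm_sub_le_norm_sub_add_norm_sub (h x) (h (radialTrunc 1 x)) (h 0)]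

end GrowthLipschitz

end GrowthLipschitz

section Moment

variable {Ω E E' : Type*} [MeasurableSpace Ω] {μ : Measure Ω} [NormedAddCommGroup E]
  [NormedSpace ℝ E] [MeasurableSpace E] [OpensMeasurableSpace E] [NormedAddCommGroup E']
  {U : Ω → E} {h : E → E'} {c a p M : ℝ}

lemma GrowthLipschitz.l1Close_comp_radialTrunc (hh : GrowthLipschitz h c a) (hc : 0 ≤ c)
    (ha : 1 ≤ a) (hap : a ≤ p) (hM : 1 ≤ M) (mU : Measurable U)
    (hU : Integrable (fun ω => ‖U ω‖ ^ p) μ) :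
    L1Close μ (fun ω => h (U ω)) (fun ω => h (radialTrunc M (U ω)))
      (3 * c * M ^ (a - p) * ∫ ω, ‖U ω‖ ^ p ∂μ) := by
  have ch := hh.continuous hc ha
  have cT : Continuous (radialTrunc M : E → E) :=
    (lipschitzWith_radialTrunc (one_pos.trans_le hM)).continuous
  exact .of_norm_sub_le
    ((ch.sub (ch.comp cT)).norm.measurable.comp mU).aestronglyMeasurable (hU.const_mul _)
    (fun ω => hh.norm_sub_comp_radialTrunc_le hc ha hap hM (U ω)) (integral_const_mul _ _).le

lemma GrowthLipschitz.l1Close_apply_zero [IsProbabilityMeasure μ] (hh : GrowthLipschitz h c a)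
    (hc : 0 ≤ c) (ha : 1 ≤ a) (hap : a ≤ p) (mU : Measurable U)
    (hU : Integrable (fun ω => ‖U ω‖ ^ p) μ) :
    L1Close μ (fun ω => h (U ω)) (fun _ => h 0) (3 * c * (1 + ∫ ω, ‖U ω‖ ^ p ∂μ)) := by
  have ch := hh.continuous hc ha
  refine .of_norm_sub_le
    ((ch.sub continuous_const).norm.measurable.comp mU).aestronglyMeasurable
    (((integrable_const 1).add hU).const_mul _)
    (fun ω => hh.norm_sub_apply_zero_le hc ha hap (U ω)) (le_of_eq ?_)
  simp only [Pi.add_apply]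
  rw [integral_const_mul, integral_add (integrable_const 1) hU, integral_const, probReal_univ,
    one_smul]

end Moment

lemma StrictlyStationary.identDistrib_eval {Ω E : Type*} [MeasurableSpace Ω] {μ : Measure Ω}
    [MeasurableSpace E] {X : ℝ → Ω → E} (hX : StrictlyStationary μ X) (t : ℝ) :
    IdentDistrib (X t) (X 0) μ μ := by
  simpa only [Function.comp_def, zero_add] using
    (hX t 1 fun _ => 0).comp (measurable_pi_apply (0 : Fin 1))

theorem eta_hereditary_growthLip_general {Ω E E' : Type*} [MeasurableSpace Ω] {μ : Measure Ω}
    [IsProbabilityMeasure μ] [NormedAddCommGroup E] [NormedSpace ℝ E] [MeasurableSpace E]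
    [OpensMeasurableSpace E] [NormedAddCommGroup E'] [MeasurableSpace E'] [BorelSpace E']
    {X : ℝ → Ω → E} (hXmeas : ∀ t, Measurable (X t)) {p D : ℝ}
    (hint : ∀ t, Integrable (fun ω => ‖X t ω‖ ^ p) μ) (hD : ∀ t, ∫ ω, ‖X t ω‖ ^ p ∂μ ≤ D)
    {h : E → E'} {c a : ℝ} (hc : 0 ≤ c) (ha : 1 ≤ a) (hap : a < p) (hh : GrowthLipschitz h c a)
    {η : ℝ → ℝ} {c₀ : ℝ} (hX : EtaWeaklyDependent μ X η c₀) :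
    EtaWeaklyDependent μ (fun t ω => h (X t ω))
      (fun r => 6 * c * (1 + D + c₀) * η r ^ ((p - a) / (p - 1))) 1 := by
  have mh : Measurable h := (hh.continuous hc ha).measurable
  have mhT (M : ℝ) (hM : 1 ≤ M) : Measurable fun x => h (radialTrunc M x) :=
    (hh.lipschitzWith_comp_radialTrunc hc ha hM).continuous.measurable
  have happrox := EtaWeaklyDependent.of_l1Close (μ := μ) (Y := fun t ω => h (X t ω))
    (Z := fun M t ω => h (radialTrunc M (X t ω))) (y₀ := h 0) (A := 3 * c * (1 + D))
    (B := 6 * c * c₀) (η := η) (sub_nonneg.2 ha) (sub_pos.2 hap) (fun t => mh.comp (hXmeas t))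
    (fun M hM t => (mhT M hM).comp (hXmeas t)) ?dependent ?close ?bounded
  case dependent =>
    intro M hM
    convert hX.comp_lipschitzWith (mhT M hM) (hh.lipschitzWith_comp_radialTrunc hc ha hM) using 1
    rw [Real.coe_toNNReal _ (by positivity)]
    ring
  case close =>
    intro M hM t
    refine (hh.l1Close_comp_radialTrunc hc ha hap.le hM (hXmeas t) (hint t)).mono ?_
    have : ∫ ω, ‖X t ω‖ ^ p ∂μ ≤ 1 + D := (hD t).trans (le_add_of_nonneg_left zero_le_one)
    calc 3 * c * M ^ (a - p) * ∫ ω, ‖X t ω‖ ^ p ∂μ ≤ 3 * c * M ^ (a - p) * (1 + D) := by gcongr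
      _ = 3 * c * (1 + D) * M ^ (-(p - a)) := by rw [neg_sub]; ring
  case bounded =>
    intro t
    refine (hh.l1Close_apply_zero hc ha hap.le (hXmeas t) (hint t)).mono ?_
    gcongr
    exact hD t
  have hcoef : 2 * (3 * c * (1 + D)) + 6 * c * c₀ = 6 * c * (1 + D + c₀) := by ring
  have hexp : a - 1 + (p - a) = p - 1 := by ring
  rwa [hcoef, hexp] at happrox

/-- Hereditary property of η-weak dependence under a growth–Lipschitz transformation
(Proposition 2.8 of Curato–Stelzer). -/
theorem eta_hereditary_growthLip
    {Ω : Type*} [MeasurableSpace Ω] (μ : Measure Ω) [IsProbabilityMeasure μ]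
    {n m : ℕ} (X : ℝ → Ω → EuclideanSpace ℝ (Fin n))
    (hXmeas : ∀ t, Measurable (X t))
    (hstat : StrictlyStationary μ X)
    (p C : ℝ) (hp : 1 < p) (hC : 0 < C)
    (hint : Integrable (fun ω => ‖X 0 ω‖ ^ p) μ)
    (hmom : (∫ ω, ‖X 0 ω‖ ^ p ∂μ) ^ (1 / p) ≤ C)
    (h : EuclideanSpace ℝ (Fin n) → EuclideanSpace ℝ (Fin m))
    (c a : ℝ) (hc : 0 < c) (ha : 1 ≤ a) (hap : a < p)
    (hGL : GrowthLip h c a)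
    (ηX : ℝ → ℝ) (c₀ : ℝ)
    (hX : EtaWeaklyDependent μ X ηX c₀) :
    ∃ C' c₁ : ℝ, 0 ≤ C' ∧
      EtaWeaklyDependent μ (fun t ω => h (X t ω))
        (fun r => C' * ηX r ^ ((p - a) / (p - 1))) c₁ := by
  have hpow (t : ℝ) : IdentDistrib (fun ω => ‖X t ω‖ ^ p) (fun ω => ‖X 0 ω‖ ^ p) μ μ :=
    (hstat.identDistrib_eval t).comp (measurable_norm.pow_const p)
  have hc₀ : 0 ≤ c₀ := hX.1
  exact ⟨_, 1, by positivity, eta_hereditary_growthLip_general hXmeas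
    (fun t => (hpow t).integrable_iff.2 hint) (fun t => (hpow t).integral_eq.le) hc.le ha hap
    hGL.2 hX⟩

end
end

section
/- Let X be an ℝ^n-valued random variable with E‖X‖^p < ∞ for some p > 1, let h : ℝ^n → ℝ^m satisfy the growth–Lipschitz condition with constants c > 0 and a, where 1 ≤ a < p, let M ≥ 1, and set X^{(M)} = X · 1_{{‖X‖ ≤ M}}. Then E‖h(X) − h(X^{(M)})‖ ≤ 3c · E[‖X‖^p] · M^{a−p}. -/
open MeasureTheory

noncomputable section

/-!
`X` and its truncation differ only where `‖X‖ > M ≥ 1`. There the three summands of the growth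
factor are each at most `‖X‖ ^ (a - 1)`, so `‖h X - h 0‖ ≤ 3 c ‖X‖ ^ a`. As `a ≤ p`, writing
`‖X‖ ^ a = ‖X‖ ^ (a - p) ‖X‖ ^ p` and bounding the first factor by `M ^ (a - p)` gives a pointwise
bound, which is then integrated.
-/

theorem rpow_le_rpow_sub_mul_rpow {M r a p : ℝ} (hM : 0 < M) (hMr : M ≤ r) (hap : a ≤ p) :
    r ^ a ≤ M ^ (a - p) * r ^ p :=
  have hr : 0 < r := hM.trans_le hMr
  calc
    r ^ a = r ^ (a - p) * r ^ p := by rw [← Real.rpow_add hr, sub_add_cancel]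
    _ ≤ M ^ (a - p) * r ^ p := by
      gcongr ?_ * _
      exact Real.rpow_le_rpow_of_nonpos hM hMr (sub_nonpos.2 hap)

section GrowthLipschitz

variable {Ω E F : Type*} {mΩ : MeasurableSpace Ω} {μ : Measure Ω}
  [SeminormedAddCommGroup E] [SeminormedAddCommGroup F]
  {X : Ω → E} {f : E → F} {C c a p M : ℝ}

/-- The truncation of a vector at norm level `M`, so that `normTruncation M (X ω)` is the value at
`ω` of the truncated random variable `X^(M)`. -/
def normTruncation (M : ℝ) (x : E) : E :=
  if ‖x‖ ≤ M then x else 0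

/-- The inequality of the growth–Lipschitz condition, between arbitrary seminormed groups and
without the normalization `f 0 = 0`. -/
def HasGrowthLipBound (f : E → F) (c a : ℝ) : Prop :=
  ∀ x y, ‖f x - f y‖ ≤ c * ‖x - y‖ * (1 + ‖x‖ ^ (a - 1) + ‖y‖ ^ (a - 1))

theorem aestronglyMeasurable_normTruncation (hX : AEStronglyMeasurable X μ) (M : ℝ) :
    AEStronglyMeasurable (fun ω => normTruncation M (X ω)) μ :=
  hX.indicator₀ (nullMeasurableSet_le hX.norm.aemeasurable aemeasurable_const)

theorem norm_comp_sub_comp_normTruncation_le (hC : 0 ≤ C) (hM : 0 < M) (hap : a ≤ p)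
    (hf : ∀ x, M < ‖x‖ → ‖f x - f 0‖ ≤ C * ‖x‖ ^ a) (x : E) :
    ‖f x - f (normTruncation M x)‖ ≤ C * M ^ (a - p) * ‖x‖ ^ p := by
  rcases le_or_gt ‖x‖ M with hx | hx
  · rw [normTruncation, if_pos hx, sub_self, norm_zero]
    positivity
  · rw [normTruncation, if_neg hx.not_ge]
    calc
      ‖f x - f 0‖ ≤ C * ‖x‖ ^ a := hf x hx
      _ ≤ C * (M ^ (a - p) * ‖x‖ ^ p) := by
        gcongr
        exact rpow_le_rpow_sub_mul_rpow hM hx.le hap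
      _ = C * M ^ (a - p) * ‖x‖ ^ p := (mul_assoc _ _ _).symm

namespace HasGrowthLipBound

theorem continuous (hf : HasGrowthLipBound f c a) (ha : 1 ≤ a) : Continuous f := by
  refine continuous_iff_continuousAt.2 fun y => tendsto_iff_norm_sub_tendsto_zero.2 ?_
  have hbound : Continuous fun x : E =>
      c * ‖x - y‖ * (1 + ‖x‖ ^ (a - 1) + ‖y‖ ^ (a - 1)) := by
    have hpow : Continuous fun x : E => ‖x‖ ^ (a - 1) :=
      continuous_norm.rpow_const fun _ => Or.inr (sub_nonneg.2 ha)
    fun_prop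
  refine squeeze_zero (fun _ => norm_nonneg _) (fun x => hf x y) ?_
  simpa only [sub_self, norm_zero, mul_zero, zero_mul] using hbound.tendsto y

theorem norm_sub_zero_le (hf : HasGrowthLipBound f c a) (hc : 0 ≤ c) (ha : 1 ≤ a) {x : E}
    (hx : 1 ≤ ‖x‖) : ‖f x - f 0‖ ≤ 3 * c * ‖x‖ ^ a := by
  have hx_rpow : 1 ≤ ‖x‖ ^ (a - 1) := Real.one_le_rpow hx (sub_nonneg.2 ha)
  -- The value is `0`, except for `a = 1`, where `0 ^ 0 = 1`.
  have hzero_rpow : (0 : ℝ) ^ (a - 1) ≤ 1 := Real.zero_rpow_le_one _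
  calc
    ‖f x - f 0‖ ≤ c * ‖x‖ * (1 + ‖x‖ ^ (a - 1) + 0 ^ (a - 1)) := by
      simpa only [sub_zero, norm_zero] using hf x 0
    _ ≤ c * ‖x‖ * (3 * ‖x‖ ^ (a - 1)) := by
      gcongr
      linarith
    _ = 3 * c * (‖x‖ * ‖x‖ ^ (a - 1)) := by ring
    _ = 3 * c * ‖x‖ ^ a := by
      rw [← Real.rpow_one_add' (norm_nonneg x) (by linarith), add_sub_cancel]

theorem norm_sub_normTruncation_le (hf : HasGrowthLipBound f c a) (hc : 0 ≤ c) (ha : 1 ≤ a)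
    (hap : a ≤ p) (hM : 1 ≤ M) (x : E) :
    ‖f x - f (normTruncation M x)‖ ≤ 3 * c * M ^ (a - p) * ‖x‖ ^ p :=
  norm_comp_sub_comp_normTruncation_le (by positivity) (one_pos.trans_le hM) hap
    (fun _ hx => hf.norm_sub_zero_le hc ha (hM.trans hx.le)) x

theorem integrable_norm_sub_normTruncation (hf : HasGrowthLipBound f c a) (hc : 0 ≤ c)
    (ha : 1 ≤ a) (hap : a ≤ p) (hM : 1 ≤ M) (hX : AEStronglyMeasurable X μ)
    (hint : Integrable (fun ω => ‖X ω‖ ^ p) μ) :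
    Integrable (fun ω => ‖f (X ω) - f (normTruncation M (X ω))‖) μ := by
  have hcont : Continuous f := hf.continuous ha
  have hmeas : AEStronglyMeasurable (fun ω => f (X ω) - f (normTruncation M (X ω))) μ :=
    (hcont.comp_aestronglyMeasurable hX).sub
      (hcont.comp_aestronglyMeasurable (aestronglyMeasurable_normTruncation hX M))
  exact (hint.const_mul _).mono' hmeas.norm <| .of_forall fun ω => by
    simpa only [norm_norm] using hf.norm_sub_normTruncation_le hc ha hap hM (X ω)

end HasGrowthLipBound

theorem truncation_growthLip_bound_general (hf : HasGrowthLipBound f c a) (hc : 0 ≤ c)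
    (ha : 1 ≤ a) (hap : a ≤ p) (hM : 1 ≤ M) (hX : AEStronglyMeasurable X μ)
    (hint : Integrable (fun ω => ‖X ω‖ ^ p) μ) :
    ∫ ω, ‖f (X ω) - f (normTruncation M (X ω))‖ ∂μ ≤
      3 * c * (∫ ω, ‖X ω‖ ^ p ∂μ) * M ^ (a - p) :=
  calc
    ∫ ω, ‖f (X ω) - f (normTruncation M (X ω))‖ ∂μ
        ≤ ∫ ω, 3 * c * M ^ (a - p) * ‖X ω‖ ^ p ∂μ :=
      integral_mono (hf.integrable_norm_sub_normTruncation hc ha hap hM hX hint)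
        (hint.const_mul _) fun ω => hf.norm_sub_normTruncation_le hc ha hap hM (X ω)
    _ = 3 * c * (∫ ω, ‖X ω‖ ^ p ∂μ) * M ^ (a - p) := by
      rw [integral_const_mul, mul_right_comm]

end GrowthLipschitz

/-- Truncation bound: for a growth–Lipschitz `h` and the truncation
`X^(M) = X 1_{‖X‖ ≤ M}`, one has `E‖h(X) - h(X^(M))‖ ≤ 3 c E[‖X‖^p] M^(a-p)`. -/
theorem truncation_growthLip_bound
    {Ω : Type*} [MeasurableSpace Ω] (μ : Measure Ω) [IsProbabilityMeasure μ]
    {n m : ℕ} (X : Ω → EuclideanSpace ℝ (Fin n)) (hX : Measurable X)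
    (p : ℝ) (hp : 1 < p)
    (hint : Integrable (fun ω => ‖X ω‖ ^ p) μ)
    (h : EuclideanSpace ℝ (Fin n) → EuclideanSpace ℝ (Fin m))
    (c a : ℝ) (hc : 0 < c) (ha : 1 ≤ a) (hap : a < p)
    (hGL : GrowthLip h c a)
    (M : ℝ) (hM : 1 ≤ M) :
    (∫ ω, ‖h (X ω) - h (if ‖X ω‖ ≤ M then X ω else 0)‖ ∂μ) ≤
      3 * c * (∫ ω, ‖X ω‖ ^ p ∂μ) * M ^ (a - p) :=
  truncation_growthLip_bound_general hGL.2 hc.le ha hap.le hM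
    hX.aestronglyMeasurable hint

end
end

section
/- Let (X_t)_{t∈ℝ} be a strictly stationary real-valued process with E|X_0|^m < ∞ for some m > 2, and suppose X is θ-weakly dependent with coefficients (θ(r))_{r≥0} and constant 1. Then for every r ≥ 0, |Cov(X_0, X_r)| ≤ 9 · E[|X_0|^m]^{1/(m−1)} · θ(r)^{(m−2)/(m−1)}. -/
open MeasureTheory ProbabilityTheory Filter

noncomputable section

/-- θ-weak dependence of a process with coefficients `θ` and constant `c₀`: `θ r → 0` and the
covariance of a bounded measurable functional of the past and a Lipschitz functional of the
future, separated by a time gap `r`, is controlled by `c₀ v Lip(G) θ(r)`. -/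
def ThetaWeaklyDependent {Ω : Type*} [MeasurableSpace Ω] (μ : Measure Ω)
    {E : Type*} [NormedAddCommGroup E] [MeasurableSpace E]
    (X : ℝ → Ω → E) (θ : ℝ → ℝ) (c₀ : ℝ) : Prop :=
  0 ≤ c₀ ∧ (∀ r, 0 ≤ θ r) ∧ Tendsto θ atTop (nhds 0) ∧
    ∀ (u v : ℕ), 0 < u → 0 < v → ∀ r : ℝ, 0 ≤ r →
      ∀ (i : Fin u → ℝ) (j : Fin v → ℝ), Monotone i → Monotone j →
        (∀ a b, i a + r ≤ j b) →
        ∀ (F : (Fin u → E) → ℝ) (G : (Fin v → E) → ℝ) (LG : ℝ),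
          Measurable F → Measurable G →
          (∀ x, |F x| ≤ 1) → (∀ x, |G x| ≤ 1) →
          Delta1Lip G LG →
          |cov μ (fun ω => F fun a => X (i a) ω) (fun ω => G fun b => X (j b) ω)| ≤
            c₀ * (v : ℝ) * LG * θ r

/-!
Truncate both variables at a level `k > 0`. The truncation is `1`-Lipschitz and bounded by `k`, so
weak dependence gives `|Cov(T X_s, T X_t)| ≤ k c₀ θ(r)`. Replacing one variable by its truncation
costs, by Hölder's inequality with exponents `m` and `m / (m - 1)`, at most `2 M k ^ (2 - m)`, where
`M` bounds the `m`-th absolute moments. Hence `|Cov(X_s, X_t)| ≤ k c₀ θ(r) + 4 M k ^ (2 - m)`, and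
`k = (M / (c₀ θ(r))) ^ (1 / (m - 1))` makes the two terms agree up to the factor `4`.
-/

/-- Truncation of a real number to the interval `[-k, k]`. Values outside go to the nearest
endpoint, not to `0` (the convention of `ProbabilityTheory.truncation`), to get a Lipschitz map. -/
def trunc (k x : ℝ) : ℝ := max (-k) (min k x)

section trunc

variable {k x : ℝ}

lemma lipschitzWith_trunc (k : ℝ) : LipschitzWith 1 (trunc k) :=
  (LipschitzWith.id.const_min k).const_max (-k)

lemma abs_trunc_le (hk : 0 ≤ k) : |trunc k x| ≤ k :=
  abs_le.2 ⟨le_max_left _ _, max_le (by linarith) (min_le_left _ _)⟩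

lemma trunc_eq_self (h : |x| ≤ k) : trunc k x = x := by
  rw [abs_le] at h
  rw [trunc, min_eq_right h.2, max_eq_right h.1]

lemma trunc_zero (hk : 0 ≤ k) : trunc k 0 = 0 :=
  trunc_eq_self (by rwa [abs_zero])

lemma abs_trunc_le_abs (hk : 0 ≤ k) : |trunc k x| ≤ |x| := by
  simpa [trunc_zero hk] using (lipschitzWith_trunc k).dist_le_mul x 0

lemma abs_sub_trunc_le_abs (hk : 0 ≤ k) : |x - trunc k x| ≤ |x| := by
  rcases le_total 0 x with hx | hx
  · have htrunc : trunc k x = min k x := max_eq_right (by linarith [le_min hk hx])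
    rw [htrunc, abs_of_nonneg (sub_nonneg.2 (min_le_right k x)), abs_of_nonneg hx]
    linarith [le_min hk hx]
  · have htrunc : trunc k x = max (-k) x := by rw [trunc, min_eq_right (hx.trans hk)]
    rw [htrunc, abs_of_nonpos (sub_nonpos.2 (le_max_right (-k) x)), abs_of_nonpos hx]
    linarith [max_le (neg_nonpos.2 hk) hx]

lemma abs_sub_trunc_rpow_le {q m : ℝ} (hk : 0 < k) (hq : 0 < q) (hqm : q ≤ m) :
    |x - trunc k x| ^ q ≤ k ^ (q - m) * |x| ^ m := by
  rcases le_or_gt |x| k with hx | hx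
  · rw [trunc_eq_self hx, sub_self, abs_zero, Real.zero_rpow hq.ne']
    positivity
  · have hx0 : 0 < |x| := hk.trans hx
    calc |x - trunc k x| ^ q ≤ |x| ^ q :=
        Real.rpow_le_rpow (abs_nonneg _) (abs_sub_trunc_le_abs hk.le) hq.le
      _ = |x| ^ (q - m) * |x| ^ m := by rw [← Real.rpow_add hx0, sub_add_cancel]
      _ ≤ k ^ (q - m) * |x| ^ m := by
        gcongr ?_ * _
        exact Real.rpow_le_rpow_of_nonpos hk hx.le (by linarith)

end trunc

section cov

variable {Ω : Type*} [MeasurableSpace Ω] {μ : Measure Ω} {f g : Ω → ℝ} {m k M : ℝ}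

lemma cov_comm_s13 (μ : Measure Ω) (f g : Ω → ℝ) : cov μ f g = cov μ g f := by
  simp only [cov, mul_comm]

lemma cov_div_div (μ : Measure Ω) (f g : Ω → ℝ) (a b : ℝ) :
    cov μ (fun ω => f ω / a) (fun ω => g ω / b) = cov μ f g / (a * b) := by
  simp only [cov, div_mul_div_comm, integral_div, sub_div]

lemma integral_abs_sub_trunc_rpow_le {q : ℝ} (hk : 0 < k) (hq : 0 < q) (hqm : q ≤ m)
    (hg : MemLp g (ENNReal.ofReal m) μ) :
    ∫ ω, |g ω - trunc k (g ω)| ^ q ∂μ ≤ k ^ (q - m) * ∫ ω, |g ω| ^ m ∂μ := by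
  have hint : Integrable (fun ω => |g ω| ^ m) μ := by
    have hm : 0 < m := hq.trans_le hqm
    simpa [ENNReal.toReal_ofReal hm.le] using hg.integrable_norm_rpow (by simpa) (by simp)
  rw [← integral_const_mul]
  exact integral_mono_of_nonneg (.of_forall fun ω => by positivity) (hint.const_mul _)
    (.of_forall fun ω => abs_sub_trunc_rpow_le hk hq hqm)

variable [IsProbabilityMeasure μ]

lemma cov_eq_covariance_s13 (hf : MemLp f 2 μ) (hg : MemLp g 2 μ) : cov μ f g = cov[f, g; μ] :=
  (covariance_eq_sub hf hg).symm

lemma integral_abs_le_Lp {p q : ℝ} (hpq : p.HolderConjugate q)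
    (hf : MemLp f (ENNReal.ofReal p) μ) :
    ∫ ω, |f ω| ∂μ ≤ (∫ ω, |f ω| ^ p ∂μ) ^ (1 / p) := by
  simpa using integral_mul_norm_le_Lp_mul_Lq hpq hf (memLp_const (1 : ℝ))

lemma abs_cov_le_two_mul_Lp_mul_Lq {p q : ℝ} (hpq : p.HolderConjugate q)
    (hf : MemLp f (ENNReal.ofReal p) μ) (hg : MemLp g (ENNReal.ofReal q) μ) :
    |cov μ f g| ≤
      2 * ((∫ ω, |f ω| ^ p ∂μ) ^ (1 / p) * (∫ ω, |g ω| ^ q ∂μ) ^ (1 / q)) := by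
  have hprod : |∫ ω, f ω * g ω ∂μ| ≤
      (∫ ω, |f ω| ^ p ∂μ) ^ (1 / p) * (∫ ω, |g ω| ^ q ∂μ) ^ (1 / q) := by
    refine abs_integral_le_integral_abs.trans ?_
    simpa only [abs_mul, Real.norm_eq_abs] using integral_mul_norm_le_Lp_mul_Lq hpq hf hg
  have hmeans : |(∫ ω, f ω ∂μ) * ∫ ω, g ω ∂μ| ≤
      (∫ ω, |f ω| ^ p ∂μ) ^ (1 / p) * (∫ ω, |g ω| ^ q ∂μ) ^ (1 / q) := by
    rw [abs_mul]
    gcongr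
    · exact abs_integral_le_integral_abs.trans (integral_abs_le_Lp hpq hf)
    · exact abs_integral_le_integral_abs.trans (integral_abs_le_Lp hpq.symm hg)
  calc |cov μ f g| ≤ |∫ ω, f ω * g ω ∂μ| + |(∫ ω, f ω ∂μ) * ∫ ω, g ω ∂μ| := abs_sub _ _
    _ ≤ _ := by linarith

lemma abs_cov_sub_trunc_le (hm : 2 ≤ m) (hk : 0 < k)
    (hf : MemLp f (ENNReal.ofReal m) μ) (hg : MemLp g (ENNReal.ofReal m) μ)
    (hfM : ∫ ω, |f ω| ^ m ∂μ ≤ M) (hgM : ∫ ω, |g ω| ^ m ∂μ ≤ M) :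
    |cov μ f (g - trunc k ∘ g)| ≤ 2 * (M * k ^ (2 - m)) := by
  obtain ⟨q, hmq⟩ : ∃ q, m.HolderConjugate q := ⟨_, .conjExponent (by linarith)⟩
  have hq : q = m / (m - 1) := hmq.conjugate_eq
  have hqm : q ≤ m := by
    rw [hq, div_le_iff₀ (by linarith)]
    nlinarith
  have hM : 0 ≤ M := (integral_nonneg fun ω => by positivity).trans hfM
  have hrem : MemLp (g - trunc k ∘ g) (ENNReal.ofReal q) μ :=
    (hg.sub ((lipschitzWith_trunc k).comp_memLp (trunc_zero hk.le) hg)).mono_exponent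
      (ENNReal.ofReal_le_ofReal hqm)
  have hrem_le : ∫ ω, |(g - trunc k ∘ g) ω| ^ q ∂μ ≤ k ^ (q - m) * M :=
    (integral_abs_sub_trunc_rpow_le hk hmq.symm.pos hqm hg).trans (by gcongr)
  have hexp : (q - m) * (1 / q) = 2 - m := by
    rw [hq]
    field_simp [hmq.ne_zero, hmq.sub_one_ne_zero]
    ring
  calc |cov μ f (g - trunc k ∘ g)|
      ≤ 2 * ((∫ ω, |f ω| ^ m ∂μ) ^ (1 / m) *
          (∫ ω, |(g - trunc k ∘ g) ω| ^ q ∂μ) ^ (1 / q)) :=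
        abs_cov_le_two_mul_Lp_mul_Lq hmq hf hrem
    _ ≤ 2 * (M ^ (1 / m) * (k ^ (q - m) * M) ^ (1 / q)) := by
        have := hmq.one_div_nonneg
        have := hmq.symm.one_div_nonneg
        gcongr
    _ = 2 * (M ^ (1 / m + 1 / q) * k ^ ((q - m) * (1 / q))) := by
        rw [Real.mul_rpow (by positivity) hM, ← Real.rpow_mul hk.le,
          Real.rpow_add_of_nonneg hM hmq.one_div_nonneg hmq.symm.one_div_nonneg]
        ring
    _ = 2 * (M * k ^ (2 - m)) := by rw [hmq.one_div_add_one_div, hexp, one_div_one, Real.rpow_one]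

lemma abs_cov_le_abs_cov_trunc_add (hm : 2 ≤ m) (hk : 0 < k)
    (hf : MemLp f (ENNReal.ofReal m) μ) (hg : MemLp g (ENNReal.ofReal m) μ)
    (hfM : ∫ ω, |f ω| ^ m ∂μ ≤ M) (hgM : ∫ ω, |g ω| ^ m ∂μ ≤ M) :
    |cov μ f g| ≤ |cov μ (trunc k ∘ f) (trunc k ∘ g)| + 4 * (M * k ^ (2 - m)) := by
  have htrunc {h : Ω → ℝ} (hh : MemLp h (ENNReal.ofReal m) μ) :
      MemLp (trunc k ∘ h) (ENNReal.ofReal m) μ :=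
    (lipschitzWith_trunc k).comp_memLp (trunc_zero hk.le) hh
  have hL2 {h : Ω → ℝ} (hh : MemLp h (ENNReal.ofReal m) μ) : MemLp h 2 μ :=
    hh.mono_exponent (by simpa using ENNReal.ofReal_le_ofReal hm)
  have htrunc_moment : ∫ ω, |(trunc k ∘ g) ω| ^ m ∂μ ≤ M := by
    refine (integral_mono_of_nonneg (.of_forall fun ω => by positivity) ?_
      (.of_forall fun ω => ?_)).trans hgM
    · simpa [ENNReal.toReal_ofReal (zero_le_two.trans hm)] using hg.integrable_norm_rpow'
    · exact Real.rpow_le_rpow (abs_nonneg _) (abs_trunc_le_abs hk.le) (by linarith)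
  have hdecomp : cov μ f g = cov μ (trunc k ∘ f) (trunc k ∘ g) + cov μ f (g - trunc k ∘ g)
      + cov μ (trunc k ∘ g) (f - trunc k ∘ f) := by
    have hf₂ := hL2 hf
    have hg₂ := hL2 hg
    have hTf₂ := hL2 (htrunc hf)
    have hTg₂ := hL2 (htrunc hg)
    rw [cov_comm_s13 μ (trunc k ∘ g), cov_eq_covariance_s13 hf₂ hg₂, cov_eq_covariance_s13 hTf₂ hTg₂,
      cov_eq_covariance_s13 hf₂ (hg₂.sub hTg₂), cov_eq_covariance_s13 (hf₂.sub hTf₂) hTg₂,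
      covariance_sub_right hf₂ hg₂ hTg₂, covariance_sub_left hf₂ hTf₂ hTg₂]
    ring
  have hright := abs_cov_sub_trunc_le hm hk hf hg hfM hgM
  have hleft := abs_cov_sub_trunc_le hm hk (htrunc hg) hf htrunc_moment hfM
  rw [hdecomp]
  linarith [abs_add_three (cov μ (trunc k ∘ f) (trunc k ∘ g)) (cov μ f (g - trunc k ∘ g))
    (cov μ (trunc k ∘ g) (f - trunc k ∘ f))]

end cov

section optimization

variable {a s t C M : ℝ}

lemma le_of_forall_le_mul_add_rpow_of_pos (hs : 0 ≤ s) (ht : 0 < t) (hM : 0 < M)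
    (h : ∀ k, 0 < k → a ≤ k * t + C * (M * k ^ (-s))) :
    a ≤ (1 + C) * (M ^ (1 / (s + 1)) * t ^ (s / (s + 1))) := by
  obtain ⟨y, hy, rfl⟩ : ∃ y, 0 < y ∧ y ^ (s + 1) = M :=
    ⟨M ^ (s + 1)⁻¹, by positivity, Real.rpow_inv_rpow hM.le (by positivity)⟩
  obtain ⟨x, hx, rfl⟩ : ∃ x, 0 < x ∧ x ^ (s + 1) = t :=
    ⟨t ^ (s + 1)⁻¹, by positivity, Real.rpow_inv_rpow ht.le (by positivity)⟩
  have hfirst : y / x * x ^ (s + 1) = y * x ^ s := by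
    rw [Real.rpow_add_one hx.ne']
    field_simp
  have hsecond : y ^ (s + 1) * (y / x) ^ (-s) = y * x ^ s := by
    rw [Real.rpow_neg (by positivity), Real.div_rpow hy.le hx.le, Real.rpow_add_one hy.ne']
    field_simp
  have hoptimal := h (y / x) (by positivity)
  rw [hfirst, hsecond] at hoptimal
  rw [← Real.rpow_mul hy.le, ← Real.rpow_mul hx.le, mul_one_div_cancel (by positivity),
    mul_div_cancel₀ _ (by positivity), Real.rpow_one]
  linarith

lemma le_of_forall_le_mul_add_rpow (hs : 0 ≤ s) (ht : 0 ≤ t) (hC : 0 ≤ C) (hM : 0 ≤ M)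
    (h : ∀ k, 0 < k → a ≤ k * t + C * (M * k ^ (-s))) :
    a ≤ (1 + C) * (M ^ (1 / (s + 1)) * t ^ (s / (s + 1))) := by
  have hperturbed : ∀ ε, 0 < ε →
      a ≤ (1 + C) * ((M + ε) ^ (1 / (s + 1)) * (t + ε) ^ (s / (s + 1))) := fun ε hε =>
    le_of_forall_le_mul_add_rpow_of_pos hs (by positivity) (by positivity) fun k hk =>
      (h k hk).trans (by gcongr <;> linarith)
  have hcont : Continuous fun ε : ℝ =>
      (1 + C) * ((M + ε) ^ (1 / (s + 1)) * (t + ε) ^ (s / (s + 1))) := by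
    have hexpM : 0 ≤ 1 / (s + 1) := by positivity
    have hexpt : 0 ≤ s / (s + 1) := by positivity
    fun_prop (disch := assumption)
  have hlim := (hcont.tendsto 0).mono_left (nhdsWithin_le_nhds (s := Set.Ioi 0))
  simp only [add_zero] at hlim
  exact ge_of_tendsto hlim (eventually_mem_nhdsWithin.mono hperturbed)

end optimization

section dependence

variable {Ω : Type*} [MeasurableSpace Ω] {μ : Measure Ω}

lemma StrictlyStationary.identDistrib {E : Type*} [MeasurableSpace E] {X : ℝ → Ω → E}
    (hX : StrictlyStationary μ X) (s t : ℝ) : IdentDistrib (X s) (X t) μ μ := by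
  simpa [Function.comp_def] using
    (hX (s - t) 1 fun _ => t).comp (measurable_pi_apply (0 : Fin 1))

lemma ThetaWeaklyDependent.abs_cov_comp_le {E : Type*} [NormedAddCommGroup E]
    [MeasurableSpace E] {X : ℝ → Ω → E} {θ : ℝ → ℝ} {c₀ : ℝ} (hX : ThetaWeaklyDependent μ X θ c₀)
    {s r t : ℝ} (hr : 0 ≤ r) (hsrt : s + r ≤ t) {F G : E → ℝ} {A B : ℝ} {L : NNReal}
    (hA : 0 < A) (hB : 0 < B) (hF : Measurable F) (hG : Measurable G)
    (hFA : ∀ x, |F x| ≤ A) (hGB : ∀ x, |G x| ≤ B) (hGL : LipschitzWith L G) :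
    |cov μ (F ∘ X s) (G ∘ X t)| ≤ c₀ * A * L * θ r := by
  have hLip : Delta1Lip (fun x : Fin 1 → E => G (x 0) / B) (L / B) := by
    refine ⟨by positivity, fun x y => ?_⟩
    rw [← sub_div, abs_div, abs_of_pos hB, Fin.sum_univ_one, div_mul_eq_mul_div]
    gcongr
    simpa only [dist_eq_norm, Real.norm_eq_abs] using hGL.dist_le_mul (x 0) (y 0)
  have hscaled := hX.2.2.2 1 1 one_pos one_pos r hr (fun _ => s) (fun _ => t) monotone_const
    monotone_const (fun _ _ => hsrt) (fun x => F (x 0) / A) (fun x => G (x 0) / B) (L / B)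
    ((hF.comp (measurable_pi_apply 0)).div_const A) ((hG.comp (measurable_pi_apply 0)).div_const B)
    (fun x => by rw [abs_div, abs_of_pos hA]; exact (div_le_one hA).2 (hFA _))
    (fun x => by rw [abs_div, abs_of_pos hB]; exact (div_le_one hB).2 (hGB _)) hLip
  rw [cov_div_div μ (fun ω => F (X s ω)) (fun ω => G (X t ω)), abs_div, abs_of_pos (mul_pos hA hB),
    div_le_iff₀ (mul_pos hA hB)] at hscaled
  refine hscaled.trans_eq ?_
  push_cast
  field_simp

theorem abs_cov_le_of_theta_weak_dependence_general [IsProbabilityMeasure μ]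
    {X : ℝ → Ω → ℝ} {θ : ℝ → ℝ} {c₀ m M s r t : ℝ} (hX : ThetaWeaklyDependent μ X θ c₀)
    (hm : 2 ≤ m) (hr : 0 ≤ r) (hsrt : s + r ≤ t)
    (hs : MemLp (X s) (ENNReal.ofReal m) μ) (ht : MemLp (X t) (ENNReal.ofReal m) μ)
    (hsM : ∫ ω, |X s ω| ^ m ∂μ ≤ M) (htM : ∫ ω, |X t ω| ^ m ∂μ ≤ M) :
    |cov μ (X s) (X t)| ≤
      5 * (M ^ (1 / (m - 1)) * (c₀ * θ r) ^ ((m - 2) / (m - 1))) := by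
  have hM : 0 ≤ M := (integral_nonneg fun ω => by positivity).trans hsM
  have hθ : 0 ≤ c₀ * θ r := mul_nonneg hX.1 (hX.2.1 r)
  have htrunc : ∀ k, 0 < k →
      |cov μ (trunc k ∘ X s) (trunc k ∘ X t)| ≤ k * (c₀ * θ r) := fun k hk => by
    have hmeas := (lipschitzWith_trunc k).continuous.measurable
    have hbound (x : ℝ) : |trunc k x| ≤ k := abs_trunc_le hk.le
    refine (hX.abs_cov_comp_le hr hsrt hk hk hmeas hmeas hbound hbound
      (lipschitzWith_trunc k)).trans_eq ?_
    push_cast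
    ring
  have hall : ∀ k, 0 < k →
      |cov μ (X s) (X t)| ≤ k * (c₀ * θ r) + 4 * (M * k ^ (-(m - 2))) := fun k hk => by
    rw [neg_sub]
    exact (abs_cov_le_abs_cov_trunc_add hm hk hs ht hsM htM).trans (by gcongr; exact htrunc k hk)
  have hopt := le_of_forall_le_mul_add_rpow (sub_nonneg.2 hm) hθ (by norm_num) hM hall
  rwa [show m - 2 + 1 = m - 1 by ring, show (1 + 4 : ℝ) = 5 by norm_num] at hopt

end dependence

/-- Covariance bound in terms of the θ-weak dependence coefficients:
`|Cov(X₀, X_r)| ≤ 9 E[|X₀|^m]^(1/(m-1)) θ(r)^((m-2)/(m-1))`. -/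
theorem abs_cov_le_of_theta_weak_dependence
    {Ω : Type*} [MeasurableSpace Ω] (μ : Measure Ω) [IsProbabilityMeasure μ]
    (X : ℝ → Ω → ℝ)
    (hXmeas : ∀ t, Measurable (X t))
    (hstat : StrictlyStationary μ X)
    (m : ℝ) (hm : 2 < m)
    (hint : Integrable (fun ω => |X 0 ω| ^ m) μ)
    (θ : ℝ → ℝ)
    (hθ : ThetaWeaklyDependent μ X θ 1) :
    ∀ r : ℝ, 0 ≤ r →
      |cov μ (X 0) (X r)| ≤
        9 * (∫ ω, |X 0 ω| ^ m ∂μ) ^ (1 / (m - 1)) * θ r ^ ((m - 2) / (m - 1)) := by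
  intro r hr
  have h0 : MemLp (X 0) (ENNReal.ofReal m) μ := by
    rw [← integrable_norm_rpow_iff (hXmeas 0).aestronglyMeasurable (by simp; linarith) (by simp),
      ENNReal.toReal_ofReal (by linarith)]
    exact hint
  have hid : IdentDistrib (X r) (X 0) μ μ := hstat.identDistrib r 0
  have hmoment : ∫ ω, |X r ω| ^ m ∂μ = ∫ ω, |X 0 ω| ^ m ∂μ :=
    (hid.comp (u := fun x => |x| ^ m) (by fun_prop)).integral_eq
  have hmain := abs_cov_le_of_theta_weak_dependence_general hθ hm.le hr (zero_add r).le
    h0 (hid.memLp_iff.2 h0) le_rfl hmoment.le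
  rw [one_mul] at hmain
  have hθr : 0 ≤ θ r := hθ.2.1 r
  rw [mul_assoc]
  exact hmain.trans (by gcongr; norm_num)

end
end

section
/- Let ξ be a random variable with the Gamma distribution with shape parameter α and rate 1 (density x^{α−1} e^{−x} / Γ(α) on (0,∞)). If α > 3 and s ≤ 0, then E[ (e^{sξ} − 1 − sξ) · ξ^{−3} ] = ( (1 − s)^{3−α} − 1 − s(α−3) ) / ( (α−1)(α−2)(α−3) ). In particular, with s = BΔ for B < 0 and Δ > 0, this gives the integral appearing in the variance of squared returns of the supOU stochastic volatility model: ∫₀^∞ (e^{BΔx} − 1 − BΔx) x^{α−4} e^{−x} / Γ(α) dx = ( (1 − BΔ)^{3−α} − 1 − ΔB(α−3) ) / ( (α−1)(α−2)(α−3) ). -/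
open MeasureTheory ProbabilityTheory Real

noncomputable section

/-! Since `α > 3`, each of the three terms of `(exp (s * x) - 1 - s * x) * x ^ (-3)` is separately
integrable against the Gamma law, so the expectation splits into tilted moments
`E[ξ ^ p * exp (s * ξ)]`. The density turns each of these into an Euler integral, and the functional
equation of `Γ` reduces the resulting Gamma values to `Γ (α - 3)`. -/

open Set

section GammaMeasure

variable {E : Type*} [NormedAddCommGroup E] [NormedSpace ℝ E] {a r p s : ℝ}

lemma gammaMeasure_eq_withDensity_restrict_Ioi (a r : ℝ) :
    gammaMeasure a r = (volume.restrict (Ioi 0)).withDensity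
      fun x ↦ ENNReal.ofReal (r ^ a / Gamma a * x ^ (a - 1) * exp (-(r * x))) := by
  rw [gammaMeasure, ← withDensity_indicator measurableSet_Ioi]
  refine withDensity_congr_ae ?_
  filter_upwards [Measure.ae_ne volume 0] with x hx
  rcases hx.lt_or_gt with hneg | hpos
  · rw [gammaPDF_of_neg hneg, indicator_of_notMem (notMem_Ioi.mpr hneg.le)]
  · rw [gammaPDF_of_nonneg hpos.le, indicator_of_mem (mem_Ioi.mpr hpos)]

lemma toReal_ofReal_gamma_density (ha : 0 < a) (hr : 0 < r) {x : ℝ} (hx : 0 < x) :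
    (ENNReal.ofReal (r ^ a / Gamma a * x ^ (a - 1) * exp (-(r * x)))).toReal =
      r ^ a / Gamma a * x ^ (a - 1) * exp (-(r * x)) :=
  ENNReal.toReal_ofReal (by positivity)

lemma integrable_gammaMeasure_iff (ha : 0 < a) (hr : 0 < r) {f : ℝ → E} :
    Integrable f (gammaMeasure a r) ↔
      IntegrableOn (fun x ↦ (r ^ a / Gamma a * x ^ (a - 1) * exp (-(r * x))) • f x) (Ioi 0) := by
  rw [gammaMeasure_eq_withDensity_restrict_Ioi, integrable_withDensity_iff_integrable_smul'
    (by fun_prop) (ae_of_all _ fun _ ↦ ENNReal.ofReal_lt_top)]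
  exact integrableOn_congr_fun
    (fun x hx ↦ by rw [toReal_ofReal_gamma_density ha hr hx]) measurableSet_Ioi

lemma integral_gammaMeasure (ha : 0 < a) (hr : 0 < r) (f : ℝ → E) :
    ∫ x, f x ∂gammaMeasure a r =
      ∫ x in Ioi 0, (r ^ a / Gamma a * x ^ (a - 1) * exp (-(r * x))) • f x := by
  rw [gammaMeasure_eq_withDensity_restrict_Ioi, integral_withDensity_eq_integral_toReal_smul
    (by fun_prop) (ae_of_all _ fun _ ↦ ENNReal.ofReal_lt_top)]
  exact setIntegral_congr_fun measurableSet_Ioi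
    fun x hx ↦ by rw [toReal_ofReal_gamma_density ha hr hx]

lemma rpow_add_sub_one (a p : ℝ) {x : ℝ} (hx : 0 < x) :
    x ^ (a + p - 1) = x ^ (a - 1) * x ^ p := by
  rw [← rpow_add hx, sub_add_eq_add_sub]

lemma gamma_density_mul_rpow_mul_exp (a r p s : ℝ) {x : ℝ} (hx : x ∈ Ioi 0) :
    (r ^ a / Gamma a * x ^ (a - 1) * exp (-(r * x))) • (x ^ p * exp (s * x)) =
      r ^ a / Gamma a * (x ^ (a + p - 1) * exp (-((r - s) * x))) := by
  have h_exp : exp (-((r - s) * x)) = exp (-(r * x)) * exp (s * x) := by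
    rw [← exp_add]; ring_nf
  rw [smul_eq_mul, rpow_add_sub_one a p hx, h_exp]
  ring

lemma integrable_rpow_mul_exp_gammaMeasure (ha : 0 < a) (hr : 0 < r) (hp : 0 < a + p)
    (hs : s < r) : Integrable (fun x ↦ x ^ p * exp (s * x)) (gammaMeasure a r) := by
  rw [integrable_gammaMeasure_iff ha hr, integrableOn_congr_fun
    (fun x hx ↦ gamma_density_mul_rpow_mul_exp a r p s hx) measurableSet_Ioi]
  have h_euler := integrableOn_rpow_mul_exp_neg_mul_rpow (s := a + p - 1) (by linarith)
    one_pos (sub_pos.mpr hs)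
  simp only [rpow_one, neg_mul] at h_euler
  exact h_euler.const_mul _

lemma integral_rpow_mul_exp_gammaMeasure (ha : 0 < a) (hr : 0 < r) (hp : 0 < a + p)
    (hs : s < r) :
    ∫ x, x ^ p * exp (s * x) ∂gammaMeasure a r =
      r ^ a * (r - s) ^ (-(a + p)) * (Gamma (a + p) / Gamma a) := by
  rw [integral_gammaMeasure ha hr, setIntegral_congr_fun measurableSet_Ioi
      (fun x hx ↦ gamma_density_mul_rpow_mul_exp a r p s hx),
    integral_const_mul, integral_rpow_mul_exp_neg_mul_Ioi hp (sub_pos.mpr hs),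
    one_div, inv_rpow (sub_pos.mpr hs).le, ← rpow_neg (sub_pos.mpr hs).le]
  ring

lemma integral_mul_rpow_gammaMeasure (ha : 0 < a) (hr : 0 < r) (p : ℝ) (f : ℝ → ℝ) :
    ∫ x, f x * x ^ p ∂gammaMeasure a r =
      r ^ a * ∫ x in Ioi 0, f x * x ^ (a + p - 1) * exp (-(r * x)) / Gamma a := by
  rw [integral_gammaMeasure ha hr, ← integral_const_mul]
  refine setIntegral_congr_fun measurableSet_Ioi fun x hx ↦ ?_
  simp only [smul_eq_mul, rpow_add_sub_one a p hx]
  ring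

end GammaMeasure

lemma Gamma_eq_sub_one_mul {z : ℝ} (hz : z ≠ 1) : Gamma z = (z - 1) * Gamma (z - 1) := by
  rw [← Gamma_add_one (sub_ne_zero.mpr hz), sub_add_cancel]

lemma exp_sub_one_sub_mul_rpow_neg_three (s x : ℝ) :
    (exp (s * x) - 1 - s * x) * x ^ (-3 : ℝ) =
      x ^ (-3 : ℝ) * exp (s * x) - x ^ (-3 : ℝ) * exp (0 * x) -
        s * (x ^ (-2 : ℝ) * exp (0 * x)) := by
  have h_pow : x ^ (-2 : ℝ) = x ^ (-3 : ℝ) * x := by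
    rcases eq_or_ne x 0 with rfl | hx
    · rw [mul_zero, zero_rpow (by norm_num)]
    · rw [← rpow_add_one hx]; norm_num
  rw [h_pow, zero_mul, exp_zero]
  ring

lemma integral_exp_sub_one_sub_mul_rpow_neg_three_gammaMeasure {α r s : ℝ} (hα : 3 < α)
    (hr : 0 < r) (hs : s < r) :
    ∫ x, (exp (s * x) - 1 - s * x) * x ^ (-3 : ℝ) ∂gammaMeasure α r =
      r ^ α * (((r - s) ^ (3 - α) - r ^ (3 - α) - s * (α - 3) * r ^ (2 - α)) /
        ((α - 1) * (α - 2) * (α - 3))) := by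
  have hα₀ : 0 < α := by linarith
  have h_neg_three : 0 < α + -3 := by linarith
  have h_neg_two : 0 < α + -2 := by linarith
  have h_exp := integrable_rpow_mul_exp_gammaMeasure hα₀ hr h_neg_three hs
  have h_one := integrable_rpow_mul_exp_gammaMeasure hα₀ hr h_neg_three hr
  have h_lin := (integrable_rpow_mul_exp_gammaMeasure hα₀ hr h_neg_two hr).const_mul s
  have hΓ₂ : Gamma (α - 2) = (α - 3) * Gamma (α - 3) := by
    rw [Gamma_eq_sub_one_mul (by linarith)]; ring_nf
  have hΓ : Gamma α = (α - 1) * ((α - 2) * Gamma (α - 2)) := by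
    rw [Gamma_eq_sub_one_mul (by linarith),
      Gamma_eq_sub_one_mul (z := α - 1) (by linarith)]
    ring_nf
  simp_rw [exp_sub_one_sub_mul_rpow_neg_three]
  rw [integral_sub (by exact h_exp.sub h_one) h_lin, integral_sub h_exp h_one, integral_const_mul,
    integral_rpow_mul_exp_gammaMeasure hα₀ hr h_neg_three hs,
    integral_rpow_mul_exp_gammaMeasure hα₀ hr h_neg_three hr,
    integral_rpow_mul_exp_gammaMeasure hα₀ hr h_neg_two hr]
  simp only [← sub_eq_add_neg, neg_sub, sub_zero, hΓ, hΓ₂]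
  have hΓ₃ : Gamma (α - 3) ≠ 0 := (Gamma_pos_of_pos (by linarith)).ne'
  have h₁ : α - 1 ≠ 0 := by linarith
  have h₂ : α - 2 ≠ 0 := by linarith
  have h₃ : α - 3 ≠ 0 := by linarith
  field_simp

theorem gamma_centered_exponential_third_negative_moment_general
    {Ω : Type*} [MeasurableSpace Ω] {μ : Measure Ω} {ξ : Ω → ℝ} {α r s : ℝ} (hα : 3 < α)
    (hr : 0 < r) (hξ : HasLaw ξ (gammaMeasure α r) μ) (hs : s < r) :
    (∫ ω, (exp (s * ξ ω) - 1 - s * ξ ω) * ξ ω ^ (-3 : ℝ) ∂μ) =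
        r ^ α * (((r - s) ^ (3 - α) - r ^ (3 - α) - s * (α - 3) * r ^ (2 - α)) /
          ((α - 1) * (α - 2) * (α - 3))) ∧
      (∫ x in Ioi 0, (exp (s * x) - 1 - s * x) * x ^ (α - 4) * exp (-(r * x)) / Gamma α) =
        ((r - s) ^ (3 - α) - r ^ (3 - α) - s * (α - 3) * r ^ (2 - α)) /
          ((α - 1) * (α - 2) * (α - 3)) := by
  have h_gamma := integral_exp_sub_one_sub_mul_rpow_neg_three_gammaMeasure hα hr hs
  refine ⟨(hξ.integral_comp (by fun_prop)).trans h_gamma, ?_⟩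
  have h_exponent : α + -3 - 1 = α - 4 := by ring
  rw [integral_mul_rpow_gammaMeasure (by linarith) hr, h_exponent] at h_gamma
  exact mul_left_cancel₀ (rpow_pos_of_pos hr α).ne' h_gamma

/-- Identity for the Gamma distribution appearing in the variance of squared returns of the
supOU stochastic volatility model: for a `Γ(α,1)`-distributed `ξ` with `α > 3` and `s ≤ 0`,
`E[(e^{sξ} - 1 - sξ) ξ^{-3}] = ((1-s)^{3-α} - 1 - s(α-3))/((α-1)(α-2)(α-3))`; in particular
with `s = BΔ`, `B < 0`, `Δ > 0`, the corresponding integral formula holds. -/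
theorem gamma_centered_exponential_third_negative_moment
    {Ω : Type*} [MeasurableSpace Ω] (μ : Measure Ω) [IsProbabilityMeasure μ]
    (ξ : Ω → ℝ) (hξ : Measurable ξ)
    (α : ℝ) (hα : 3 < α)
    (hlaw : μ.map ξ = gammaMeasure α 1)
    (s : ℝ) (hs : s ≤ 0)
    (B Δ : ℝ) (hB : B < 0) (hΔ : 0 < Δ) :
    (∫ ω, (exp (s * ξ ω) - 1 - s * ξ ω) * ξ ω ^ (-(3 : ℝ)) ∂μ) =
        ((1 - s) ^ (3 - α) - 1 - s * (α - 3)) / ((α - 1) * (α - 2) * (α - 3)) ∧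
      (∫ x in Set.Ioi (0 : ℝ),
          (exp (B * Δ * x) - 1 - B * Δ * x) * x ^ (α - 4) * exp (-x) / Gamma α) =
        ((1 - B * Δ) ^ (3 - α) - 1 - Δ * B * (α - 3)) / ((α - 1) * (α - 2) * (α - 3)) := by
  have hξ_law : HasLaw ξ (gammaMeasure α 1) μ := ⟨hξ.aemeasurable, hlaw⟩
  have h_general {t : ℝ} (ht : t < 1) :=
    gamma_centered_exponential_third_negative_moment_general hα one_pos hξ_law ht
  simp only [one_rpow, one_mul, mul_one] at h_general
  exact ⟨(h_general (hs.trans_lt one_pos)).1,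
    mul_comm B Δ ▸ (h_general ((mul_neg_of_neg_of_pos hB hΔ).trans one_pos)).2⟩

end
end
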